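/- arXiv:2211.00766 — 3 statements merged into one kernel-verified Lean document; each statement's English description precedes it below -/
import Mathlib

section
/- For every positive integer k, every finite family P_1, …, P_k of nonzero good polynomials in one variable, and every finite coloring of T, there exist x, y ∈ T such that the k+2 elements x, x + P_1(y), x + P_2(y), …, x + P_k(y), and x·y all receive the same color. -/
/-- `InT p` means `p` is a nonzero good polynomial in one variable, i.e. an element
of the semiring `T`: nonzero, with nonnegative integer coefficients (automatic over `ℕ`)
and zero constant term. -/
def InT (p : Polynomial ℕ) : Prop := p ≠ 0 ∧ p.coeff 0 = 0

open Polynomial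

/-- Compactness for finite colorings: if every coloring satisfies one of a family of properties,
each of which depends on finitely many values of the coloring, then finitely many of these
properties suffice. -/
theorem exists_finset_forall_coloring {R I κ : Type} [Finite κ] (Q : I → (R → κ) → Prop)
    (supp : I → Finset R)
    (hQ : ∀ i c c', (∀ x ∈ supp i, c x = c' x) → Q i c → Q i c')
    (h : ∀ c, ∃ i, Q i c) : ∃ S : Finset I, ∀ c, ∃ i ∈ S, Q i c := by
  let _ : TopologicalSpace κ := ⊥
  have _ : DiscreteTopology κ := ⟨rfl⟩
  have hopen : ∀ i, IsOpen {c : R → κ | Q i c} := by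
    intro i
    rw [isOpen_pi_iff]
    intro c hc
    refine ⟨supp i, fun x => {c x}, fun x _ => ⟨isOpen_discrete _, rfl⟩, fun c' hc' => ?_⟩
    exact hQ i c c' (fun x hx => (hc' x hx).symm) hc
  obtain ⟨S, hS⟩ := isCompact_univ.elim_finite_subcover _ hopen
    (fun c _ => Set.mem_iUnion.2 (h c))
  refine ⟨S, fun c => ?_⟩
  simpa using hS (Set.mem_univ c)

section PolynomialVanDerWaerden

variable {R κ : Type} [CommRing R]

/-- Every finite coloring of `R` has a point `a` and a `d ∈ D` such that `a` and all
`a + p(d)`, `p ∈ A`, have the same color. -/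
def HasMonochromaticShifts (D : Set R) (A : Finset R[X]) : Prop :=
  ∀ (κ : Type) [Finite κ] (c : R → κ), ∃ a, ∃ d ∈ D, ∀ p ∈ A, c (a + p.eval d) = c a

/-- Either `a + p(d)`, `p ∈ A`, all have the color of `a` for some `d ∈ E`, or there are `m`
colors `s` each of which is the color of all `a + p(d)`, `p ∈ A`, for some `d ∈ E`. -/
def ColorFocused (A : Finset R[X]) (m : ℕ) (c : R → κ) (a : R) (E : Finset R) : Prop :=
  (∃ d ∈ E, ∀ p ∈ A, c (a + p.eval d) = c a) ∨
    ∃ L : Finset κ, L.card = m ∧ ∀ s ∈ L, ∃ d ∈ E, ∀ p ∈ A, c (a + p.eval d) = s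

/-- The polynomial `p(X + e) - p(e) - q(X)`. -/
noncomputable def shiftSub (q p : R[X]) (e : R) : R[X] :=
  taylor e p - C (p.eval e) - q

theorem eval_shiftSub (q p : R[X]) (e d : R) :
    (shiftSub q p e).eval d = p.eval (d + e) - p.eval e - q.eval d := by
  simp [shiftSub, taylor_eval]

open Classical in
/-- The differences to which the van der Waerden property is reduced. -/
noncomputable def shiftFamily (q : R[X]) (A : Finset R[X]) (E : Finset R) : Finset R[X] :=
  Finset.image₂ (shiftSub q) A (insert 0 E)

theorem exists_colorFocused {D : Set R} (hD : ∀ x ∈ D, ∀ y ∈ D, x + y ∈ D) {A : Finset R[X]}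
    (hA : ∀ p ∈ A, p.coeff 0 = 0) {q : R[X]}
    (ih : ∀ E, HasMonochromaticShifts D (shiftFamily q A E)) [Finite κ] (m : ℕ) (c : R → κ) :
    ∃ a, ∃ E : Finset R, ↑E ⊆ D ∧ ColorFocused A m c a E := by
  classical
  induction m generalizing c with
  | zero => exact ⟨0, ∅, by simp, Or.inr ⟨∅, by simp⟩⟩
  | succ m hm =>
    let supp : R × Finset R → Finset R := fun i =>
      insert i.1 (Finset.image₂ (fun (p : R[X]) d => i.1 + p.eval d) A i.2)
    have hsupp : ∀ (i : R × Finset R), ∀ d ∈ i.2, ∀ p ∈ A, i.1 + p.eval d ∈ supp i :=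
      fun i d hd p hp => Finset.mem_insert_of_mem (Finset.mem_image₂.2 ⟨p, hp, d, hd, rfl⟩)
    obtain ⟨S, hS⟩ := exists_finset_forall_coloring
      (fun (i : R × Finset R) (c : R → κ) => ↑i.2 ⊆ D ∧ ColorFocused A m c i.1 i.2) supp
      (by
        rintro i c c' hcc ⟨hE, h⟩
        refine ⟨hE, ?_⟩
        rcases h with ⟨d, hd, h⟩ | ⟨L, hL, h⟩
        · refine Or.inl ⟨d, hd, fun p hp => ?_⟩
          rw [← hcc _ (hsupp i d hd p hp), ← hcc i.1 (Finset.mem_insert_self _ _), h p hp]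
        · refine Or.inr ⟨L, hL, fun s hs => ?_⟩
          obtain ⟨d, hd, h⟩ := h s hs
          exact ⟨d, hd, fun p hp => by rw [← hcc _ (hsupp i d hd p hp), h p hp]⟩)
      (fun c => by
        obtain ⟨a, E, h⟩ := hm c
        exact ⟨(a, E), h⟩)
    obtain ⟨x, d, hd, hx⟩ := ih (S.biUnion Prod.snd) (S.biUnion supp → κ) fun x f => c (x + f)
    obtain ⟨⟨a, E⟩, hi, hE, hfoc⟩ := hS fun y => c (x + y)
    have hshift : ∀ f ∈ supp (a, E), ∀ p ∈ A, ∀ e ∈ insert 0 E,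
        c (x + (p.eval (d + e) - p.eval e - q.eval d) + f) = c (x + f) := by
      intro f hf p hp e he
      rw [← eval_shiftSub]
      have hmem : shiftSub q p e ∈ shiftFamily q A (S.biUnion Prod.snd) := by
        refine Finset.mem_image₂.2 ⟨p, hp, e, ?_, rfl⟩
        rcases Finset.mem_insert.1 he with rfl | he
        · exact Finset.mem_insert_self _ _
        · exact Finset.mem_insert_of_mem (Finset.mem_biUnion.2 ⟨_, hi, he⟩)
      exact congrFun (hx _ hmem) ⟨f, Finset.mem_biUnion.2 ⟨_, hi, hf⟩⟩
    simp only [ColorFocused] at hfoc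
    rcases hfoc with ⟨e, he, h⟩ | ⟨L, hL, h⟩
    · exact ⟨x + a, E, hE, Or.inl ⟨e, he, fun p hp => by rw [add_assoc, h p hp]⟩⟩
    by_cases hcL : c (x + a) ∈ L
    · obtain ⟨e, he, h⟩ := h _ hcL
      exact ⟨x + a, E, hE, Or.inl ⟨e, he, fun p hp => by rw [add_assoc, h p hp]⟩⟩
    refine ⟨x + a - q.eval d, insert d (E.image (d + ·)), ?_,
      Or.inr ⟨insert (c (x + a)) L, by rw [Finset.card_insert_of_notMem hcL, hL], ?_⟩⟩
    · intro y hy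
      rcases Finset.mem_insert.1 hy with rfl | hy
      · exact hd
      · obtain ⟨e, he, rfl⟩ := Finset.mem_image.1 hy
        exact hD _ hd _ (hE he)
    · intro s hs
      rcases Finset.mem_insert.1 hs with rfl | hs
      · refine ⟨d, Finset.mem_insert_self _ _, fun p hp => ?_⟩
        rw [← hshift a (Finset.mem_insert_self _ _) p hp 0 (Finset.mem_insert_self _ _),
          ← coeff_zero_eq_eval_zero, hA p hp, add_zero]
        congr 1
        ring
      · obtain ⟨e, he, h⟩ := h s hs
        refine ⟨d + e, Finset.mem_insert_of_mem (Finset.mem_image_of_mem _ he), fun p hp => ?_⟩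
        rw [← h p hp, ← hshift (a + p.eval e) (hsupp (a, E) e he p hp) p hp e
          (Finset.mem_insert_of_mem he)]
        congr 1
        ring

theorem hasMonochromaticShifts_of_shiftFamily {D : Set R} (hD : ∀ x ∈ D, ∀ y ∈ D, x + y ∈ D)
    {A : Finset R[X]} (hA : ∀ p ∈ A, p.coeff 0 = 0) {q : R[X]}
    (ih : ∀ E, HasMonochromaticShifts D (shiftFamily q A E)) : HasMonochromaticShifts D A := by
  intro κ _ c
  have := Fintype.ofFinite κ
  obtain ⟨a, E, hE, ⟨d, hd, h⟩ | ⟨L, hL, -⟩⟩ :=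
    exists_colorFocused hD hA ih (Fintype.card κ + 1) c
  · exact ⟨a, d, hE hd, h⟩
  · have := L.card_le_univ
    omega

open Classical in
/-- The coefficients of degree `n` of the members of `A` of degree `n`. -/
noncomputable def topCoeffs (A : Finset R[X]) (n : ℕ) : Finset R :=
  (A.filter fun p => p.natDegree = n).image fun p => p.coeff n

theorem mem_topCoeffs {A : Finset R[X]} {n : ℕ} {x : R} :
    x ∈ topCoeffs A n ↔ ∃ p ∈ A, p.natDegree = n ∧ p.coeff n = x := by
  simp [topCoeffs, and_assoc]

theorem natDegree_shiftSub_le {q p : R[X]} (h : q.natDegree ≤ p.natDegree) (e : R) :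
    (shiftSub q p e).natDegree ≤ p.natDegree := by
  refine (natDegree_sub_le _ _).trans (max_le ((natDegree_sub_le _ _).trans ?_) h)
  simp

theorem coeff_shiftSub {q p : R[X]} (e : R) (hp : p.natDegree ≠ 0) :
    (shiftSub q p e).coeff p.natDegree = p.coeff p.natDegree - q.coeff p.natDegree := by
  simp [shiftSub, coeff_C, hp]

theorem natDegree_shiftSub {q p : R[X]} (e : R) (h : q.natDegree < p.natDegree) :
    (shiftSub q p e).natDegree = p.natDegree := by
  refine (natDegree_shiftSub_le h.le e).antisymm (le_natDegree_of_ne_zero ?_)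
  rw [coeff_shiftSub e (by omega), coeff_eq_zero_of_natDegree_lt h, sub_zero, coeff_natDegree,
    leadingCoeff_ne_zero]
  rintro rfl
  simp at h

theorem topCoeffs_shiftFamily {q : R[X]} {A : Finset R[X]} (E : Finset R)
    (hmin : ∀ p ∈ A, q.natDegree ≤ p.natDegree) {n : ℕ} (hn : q.natDegree < n) :
    topCoeffs (shiftFamily q A E) n = topCoeffs A n := by
  classical
  ext x
  simp only [mem_topCoeffs, shiftFamily, Finset.mem_image₂]
  constructor
  · rintro ⟨_, ⟨p, hp, e, he, rfl⟩, hdeg, rfl⟩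
    have hle := natDegree_shiftSub_le (hmin p hp) e
    have hlt : q.natDegree < p.natDegree := by omega
    rw [natDegree_shiftSub e hlt] at hdeg
    subst hdeg
    exact ⟨p, hp, rfl, by
      rw [coeff_shiftSub e (by omega), coeff_eq_zero_of_natDegree_lt hlt, sub_zero]⟩
  · rintro ⟨p, hp, rfl, rfl⟩
    exact ⟨_, ⟨p, hp, 0, by simp, rfl⟩, natDegree_shiftSub 0 hn, by
      rw [coeff_shiftSub 0 (by omega), coeff_eq_zero_of_natDegree_lt hn, sub_zero]⟩

theorem card_topCoeffs_shiftFamily_lt {q : R[X]} {A : Finset R[X]} (E : Finset R) (hq : q ∈ A)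
    (hq0 : q.natDegree ≠ 0) (hmin : ∀ p ∈ A, q.natDegree ≤ p.natDegree) :
    (topCoeffs (shiftFamily q A E) q.natDegree).card < (topCoeffs A q.natDegree).card := by
  classical
  have hmem : q.coeff q.natDegree ∈ topCoeffs A q.natDegree := mem_topCoeffs.2 ⟨q, hq, rfl, rfl⟩
  have hsub : topCoeffs (shiftFamily q A E) q.natDegree ⊆
      ((topCoeffs A q.natDegree).erase (q.coeff q.natDegree)).image
        (· - q.coeff q.natDegree) := by
    intro x hx
    simp only [mem_topCoeffs, shiftFamily, Finset.mem_image₂] at hx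
    obtain ⟨_, ⟨p, hp, e, -, rfl⟩, hdeg, rfl⟩ := hx
    have hpq : p.natDegree = q.natDegree := by
      by_contra hne
      have := natDegree_shiftSub e (lt_of_le_of_ne (hmin p hp) (Ne.symm hne))
      omega
    have hc := coeff_shiftSub (q := q) e (hpq ▸ hq0 : p.natDegree ≠ 0)
    rw [hpq] at hc
    refine Finset.mem_image.2 ⟨p.coeff q.natDegree, Finset.mem_erase.2 ⟨fun heq => ?_,
      mem_topCoeffs.2 ⟨p, hp, hpq, rfl⟩⟩, hc.symm⟩
    rw [heq, sub_self] at hc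
    have h0 : shiftSub q p e = 0 := by
      rwa [← hdeg, coeff_natDegree, leadingCoeff_eq_zero] at hc
    rw [h0, natDegree_zero] at hdeg
    exact hq0 hdeg.symm
  calc _ ≤ _ := Finset.card_le_card hsub
    _ ≤ _ := Finset.card_image_le
    _ < _ := Finset.card_erase_lt_of_mem hmem

/-- A polynomial van der Waerden theorem for commutative rings. -/
theorem hasMonochromaticShifts {D : Set R} (hne : D.Nonempty)
    (hD : ∀ x ∈ D, ∀ y ∈ D, x + y ∈ D) (A : Finset R[X]) (hA : ∀ p ∈ A, p.coeff 0 = 0) :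
    HasMonochromaticShifts D A := by
  classical
  obtain ⟨N, hN⟩ : ∃ N, ∀ p ∈ A, p.natDegree ≤ N :=
    ⟨A.sup natDegree, fun p hp => Finset.le_sup (f := natDegree) hp⟩
  have wf : WellFounded (InvImage (Pi.Lex (· > ·) (fun {_ : Fin (N + 1)} => (· < ·)))
      (fun (A : Finset R[X]) (i : Fin (N + 1)) => (topCoeffs A i).card)) :=
    InvImage.wf _ (Pi.Lex.wellFounded _ fun _ => wellFounded_lt)
  induction A using wf.induction with
  | _ A ih =>
  have key : HasMonochromaticShifts D (A.filter (· ≠ 0)) := by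
    rcases (A.filter (· ≠ 0)).eq_empty_or_nonempty with hA0 | hA0
    · intro κ _ c
      obtain ⟨d, hd⟩ := hne
      exact ⟨0, d, hd, by simp [hA0]⟩
    obtain ⟨q, hq, hmin⟩ := Finset.exists_min_image _ natDegree hA0
    have hA' : ∀ p ∈ A.filter (· ≠ 0), p.coeff 0 = 0 := fun p hp => hA p (Finset.mem_filter.1 hp).1
    have hqA := Finset.mem_filter.1 hq
    have hq0 : q.natDegree ≠ 0 := by
      intro h
      have := eq_C_of_natDegree_eq_zero h
      rw [hA q hqA.1, C_0] at this
      exact hqA.2 this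
    have htop : ∀ n, n ≠ 0 → topCoeffs (A.filter (· ≠ 0)) n = topCoeffs A n := by
      intro n hn
      ext x
      simp only [mem_topCoeffs, Finset.mem_filter]
      constructor
      · rintro ⟨p, hp, h⟩
        exact ⟨p, hp.1, h⟩
      · rintro ⟨p, hp, h⟩
        refine ⟨p, ⟨hp, ?_⟩, h⟩
        rintro rfl
        exact hn (by simpa using h.1.symm)
    refine hasMonochromaticShifts_of_shiftFamily hD hA' (q := q) fun E => ih _ ?_ ?_ ?_
    · refine ⟨⟨q.natDegree, by have := hN q hqA.1; omega⟩, fun j hj => ?_, ?_⟩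
      · have hj' : q.natDegree < j := hj
        simp only
        rw [topCoeffs_shiftFamily E hmin hj', htop _ (by omega)]
      · simp only
        rw [← htop _ hq0]
        exact card_topCoeffs_shiftFamily_lt E hq hq0 hmin
    · intro p hp
      obtain ⟨p, hp, e, -, rfl⟩ := Finset.mem_image₂.1 hp
      simp [shiftSub, hA q hqA.1, taylor_coeff_zero]
    · intro p hp
      obtain ⟨p, hp', e, -, rfl⟩ := Finset.mem_image₂.1 hp
      exact (natDegree_shiftSub_le (hmin p hp') e).trans (hN p (Finset.mem_filter.1 hp').1)
  intro κ _ c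
  obtain ⟨a, d, hd, h⟩ := key κ c
  refine ⟨a, d, hd, fun p hp => ?_⟩
  by_cases hp0 : p = 0
  · simp [hp0]
  · exact h p (Finset.mem_filter.2 ⟨hp, hp0⟩)

end PolynomialVanDerWaerden

theorem exists_add_map_eq_map (S : Finset ℤ[X]) :
    ∃ v : ℕ[X], ∀ a ∈ S, ∃ b : ℕ[X], a + v.map (Nat.castRingHom ℤ) = b.map (Nat.castRingHom ℤ) := by
  classical
  have single : ∀ a : ℤ[X], ∃ v b : ℕ[X],
      a + v.map (Nat.castRingHom ℤ) = b.map (Nat.castRingHom ℤ) := by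
    intro a
    induction a using Polynomial.induction_on' with
    | add p q hp hq =>
      obtain ⟨v, b, h⟩ := hp
      obtain ⟨v', b', h'⟩ := hq
      exact ⟨v + v', b + b', by rw [Polynomial.map_add, Polynomial.map_add, ← h, ← h']; ring⟩
    | monomial n m =>
      refine ⟨monomial n (-m).toNat, monomial n m.toNat, ?_⟩
      rw [map_monomial, map_monomial, ← map_add]
      congr 1
      simp only [eq_natCast]
      omega
  induction S using Finset.induction_on with
  | empty => exact ⟨0, by simp⟩
  | insert a S _ ih =>
    obtain ⟨v, hv⟩ := ih
    obtain ⟨w, b, hb⟩ := single a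
    refine ⟨v + w, fun a' ha' => ?_⟩
    rcases Finset.mem_insert.1 ha' with rfl | ha'
    · exact ⟨b + v, by rw [Polynomial.map_add, Polynomial.map_add, ← hb]; ring⟩
    · obtain ⟨b', hb'⟩ := hv a' ha'
      exact ⟨b' + w, by rw [Polynomial.map_add, Polynomial.map_add, ← hb']; ring⟩

/-- A polynomial van der Waerden theorem for the semiring `ℕ[X]`. -/
theorem exists_monochromatic_shifts {κ : Type} [Finite κ] (Q : Finset ℕ[X][X])
    (hQ : ∀ q ∈ Q, q.coeff 0 = 0) (c : ℕ[X] → κ) :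
    ∃ a h : ℕ[X], h ≠ 0 ∧ ∀ q ∈ Q, c (a + q.eval h) = c a := by
  classical
  let ι : ℕ[X] →+* ℤ[X] := mapRingHom (Nat.castRingHom ℤ)
  have hι : Function.Injective ι := map_injective _ Nat.cast_injective
  have heval : ∀ (q : ℕ[X][X]) (h : ℕ[X]), (q.map ι).eval (ι h) = ι (q.eval h) := fun q h => by
    rw [eval_map, eval₂_at_apply]
  have hvdw : HasMonochromaticShifts (ι '' {h | h ≠ 0}) (Q.image (Polynomial.map ι)) := by
    refine hasMonochromaticShifts ⟨ι 1, Set.mem_image_of_mem _ one_ne_zero⟩ ?_ _ ?_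
    · rintro _ ⟨x, hx, rfl⟩ _ ⟨y, hy, rfl⟩
      refine ⟨x + y, fun h => hx ?_, map_add _ _ _⟩
      ext n
      have := congrArg (fun p => p.coeff n) h
      simp only [coeff_add, coeff_zero] at this ⊢
      omega
    · intro p hp
      obtain ⟨q, hq, rfl⟩ := Finset.mem_image.1 hp
      rw [coeff_map, hQ q hq, map_zero]
  obtain ⟨S, hS⟩ := exists_finset_forall_coloring
    (fun (i : ℤ[X] × ℕ[X]) (c : ℤ[X] → κ) =>
      i.2 ≠ 0 ∧ ∀ q ∈ Q, c (i.1 + ι (q.eval i.2)) = c i.1)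
    (fun i => insert i.1 (Q.image fun q => i.1 + ι (q.eval i.2)))
    (by
      rintro i c c' hcc ⟨h0, h⟩
      refine ⟨h0, fun q hq => ?_⟩
      rw [← hcc _ (Finset.mem_insert_of_mem (Finset.mem_image_of_mem _ hq)),
        ← hcc i.1 (Finset.mem_insert_self _ _), h q hq])
    (fun c => by
      obtain ⟨a, _, ⟨h, h0, rfl⟩, hc⟩ := hvdw κ c
      exact ⟨(a, h), h0, fun q hq => by rw [← heval, hc _ (Finset.mem_image_of_mem _ hq)]⟩)
  obtain ⟨v, hv⟩ := exists_add_map_eq_map (S.image Prod.fst)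
  obtain ⟨⟨a, h⟩, hi, h0, hc⟩ := hS fun f => c (Function.invFun ι (f + ι v))
  obtain ⟨b, hb⟩ := hv a (Finset.mem_image_of_mem Prod.fst hi)
  change a + ι v = ι b at hb
  refine ⟨b, h, h0, fun q hq => ?_⟩
  have := hc q hq
  simpa only [add_right_comm a, hb, ← map_add, Function.leftInverse_invFun hι _] using this

/-- The finitary form of `exists_monochromatic_shifts`. -/
theorem exists_finset_monochromatic_shifts (κ : Type) [Finite κ] (Q : Finset ℕ[X][X])
    (hQ : ∀ q ∈ Q, q.coeff 0 = 0) :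
    ∃ S : Finset (ℕ[X] × ℕ[X]), ∀ c : ℕ[X] → κ,
      ∃ s ∈ S, s.2 ≠ 0 ∧ ∀ q ∈ Q, c (s.1 + q.eval s.2) = c s.1 := by
  classical
  refine exists_finset_forall_coloring
    (fun (i : ℕ[X] × ℕ[X]) (c : ℕ[X] → κ) => i.2 ≠ 0 ∧ ∀ q ∈ Q, c (i.1 + q.eval i.2) = c i.1)
    (fun i => insert i.1 (Q.image fun q => i.1 + q.eval i.2)) ?_ fun c => ?_
  · rintro i c c' hcc ⟨h0, h⟩
    refine ⟨h0, fun q hq => ?_⟩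
    rw [← hcc _ (Finset.mem_insert_of_mem (Finset.mem_image_of_mem _ hq)),
      ← hcc i.1 (Finset.mem_insert_self _ _), h q hq]
  · obtain ⟨a, h, h0, hc⟩ := exists_monochromatic_shifts Q hQ c
    exact ⟨(a, h), h0, hc⟩

theorem InT.mul_right {p q : ℕ[X]} (hp : InT p) (hq : q ≠ 0) : InT (p * q) :=
  ⟨mul_ne_zero hp.1 hq, by simp [mul_coeff_zero, hp.2]⟩

theorem InT.add_mul {p q : ℕ[X]} (hp : InT p) (hq : InT q) (r : ℕ[X]) : InT (p + q * r) := by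
  refine ⟨fun h => hp.1 ?_, by simp [mul_coeff_zero, hp.2, hq.2]⟩
  ext n
  have := congrArg (fun p => p.coeff n) h
  simp only [coeff_add, coeff_zero] at this ⊢
  omega

theorem InT.aeval_ne_zero {v h : ℕ[X]} (hv : InT v) (hh : h ≠ 0) : aeval v h ≠ 0 := by
  have hv0 : v.natDegree ≠ 0 := by
    intro h0
    have := eq_C_of_natDegree_eq_zero h0
    rw [hv.2, C_0] at this
    exact hv.1 this
  intro h0
  rw [← comp_eq_aeval, comp_eq_zero_iff] at h0
  rcases h0 with h0 | ⟨-, h0⟩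
  · exact hh h0
  · exact hv0 (by rw [h0, natDegree_C])

/-- There are `x, v` and `m` colors `s`, each with factorizations `x = z * w` and `v = z * u` such
that all `w + u * g(z, u)`, `g ∈ G`, have color `s`. -/
def HasColorChain {κ : Type} (χ : ℕ[X] → κ) (m : ℕ) (G : Finset (MvPolynomial (Fin 2) ℕ)) : Prop :=
  ∃ x v, InT x ∧ InT v ∧ ∃ L : Finset κ, L.card = m ∧ ∀ s ∈ L, ∃ z u w,
    InT u ∧ InT w ∧ x = z * w ∧ v = z * u ∧
      ∀ g ∈ G, χ (w + u * MvPolynomial.aeval ![z, u] g) = s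

/-- The polynomial `a(z * u)` in the variables `z, u`. -/
noncomputable def evalProd (a : ℕ[X]) : MvPolynomial (Fin 2) ℕ :=
  aeval (MvPolynomial.X 0 * MvPolynomial.X 1) a

theorem aeval_evalProd (z u a : ℕ[X]) :
    MvPolynomial.aeval ![z, u] (evalProd a) = aeval (z * u) a := by
  simp [evalProd, ← aeval_algHom_apply]

/-- The polynomial `z ^ 2 * p(z ^ 2 * u)` in the variables `z, u`. -/
noncomputable def evalSqMul (p : ℕ[X]) : MvPolynomial (Fin 2) ℕ :=
  MvPolynomial.X 0 ^ 2 * aeval (MvPolynomial.X 0 ^ 2 * MvPolynomial.X 1) p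

theorem aeval_evalSqMul (z u p : ℕ[X]) :
    MvPolynomial.aeval ![z, u] (evalSqMul p) = z ^ 2 * aeval (z ^ 2 * u) p := by
  simp [evalSqMul, ← aeval_algHom_apply]

/-- The polynomial `h(z * u) * g(z ^ 2 * u, u * h(z * u))` in the variables `z, u`. -/
noncomputable def substChain (h : ℕ[X]) (g : MvPolynomial (Fin 2) ℕ) : MvPolynomial (Fin 2) ℕ :=
  evalProd h * MvPolynomial.bind₁
    ![MvPolynomial.X 0 ^ 2 * MvPolynomial.X 1, MvPolynomial.X 1 * evalProd h] g

theorem aeval_substChain (z u h : ℕ[X]) (g : MvPolynomial (Fin 2) ℕ) :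
    MvPolynomial.aeval ![z, u] (substChain h g) =
      aeval (z * u) h * MvPolynomial.aeval ![z ^ 2 * u, u * aeval (z * u) h] g := by
  rw [substChain, map_mul, aeval_evalProd, MvPolynomial.aeval_bind₁]
  congr 3
  ext i : 1
  fin_cases i <;> simp [aeval_evalProd]

/-- The polynomial `Y * g(1, X ^ 2 * Y)` in the outer variable `Y`. -/
noncomputable def evalOneSq (g : MvPolynomial (Fin 2) ℕ) : ℕ[X][X] :=
  X * MvPolynomial.aeval (![1, C (X ^ 2) * X] : Fin 2 → ℕ[X][X]) g

theorem ringHom_mvPolynomial_aeval {σ A B : Type*} [CommSemiring A] [CommSemiring B]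
    [Algebra ℕ A] [Algebra ℕ B] (φ : A →+* B) (f : σ → A) (g : MvPolynomial σ ℕ) :
    φ (MvPolynomial.aeval f g) = MvPolynomial.aeval (fun i => φ (f i)) g := by
  rw [MvPolynomial.map_aeval, MvPolynomial.aeval_def, MvPolynomial.coe_eval₂Hom]
  congr 1
  exact Subsingleton.elim _ _

theorem aeval_eval_evalOneSq (v h : ℕ[X]) (g : MvPolynomial (Fin 2) ℕ) :
    aeval v ((evalOneSq g).eval h) =
      aeval v h * MvPolynomial.aeval ![1, v ^ 2 * aeval v h] g := by
  rw [evalOneSq, eval_mul, eval_X, map_mul, ← coe_evalRingHom, ringHom_mvPolynomial_aeval,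
    ← AlgHom.coe_toRingHom (aeval v), ringHom_mvPolynomial_aeval]
  congr 3
  ext i : 1
  fin_cases i <;> simp

theorem aeval_eq_mul_aeval_divX {p : ℕ[X]} (hp : p.coeff 0 = 0) (y : ℕ[X]) :
    aeval y p = y * aeval y p.divX := by
  conv_lhs => rw [← X_mul_divX_add p, hp]
  simp

/-- Given a long enough color chain, either the required pattern exists or the chain can be
prolonged by a new color. -/
theorem HasColorChain.succ {κ ι : Type} [Finite κ] [Finite ι] {χ : ℕ[X] → κ} {P : ι → ℕ[X]}
    (hP : ∀ i, (P i).coeff 0 = 0)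
    (hχ : ¬ ∃ x y, InT x ∧ InT y ∧ (∀ i, χ (x + aeval y (P i)) = χ x) ∧ χ (x * y) = χ x)
    {m : ℕ} (ih : ∀ G, HasColorChain χ m G) (G : Finset (MvPolynomial (Fin 2) ℕ)) :
    HasColorChain χ (m + 1) G := by
  classical
  have := Fintype.ofFinite ι
  obtain ⟨S, hS⟩ := exists_finset_monochromatic_shifts κ (G.image evalOneSq) (by
    intro q hq
    obtain ⟨g, -, rfl⟩ := Finset.mem_image.1 hq
    simp [evalOneSq])
  obtain ⟨x, v, hx, hv, L, hL, hchain⟩ := ih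
    (S.image (fun s => evalProd s.1) ∪
      Finset.image₂ (fun s i => evalProd s.1 + evalSqMul (P i).divX) S Finset.univ ∪
      Finset.image₂ (fun s g => evalProd s.1 + substChain s.2 g) S G)
  obtain ⟨⟨a, h⟩, hs, h0, hmono⟩ := hS fun f => χ (v * (x + v * aeval v f))
  simp only at h0 hmono
  have hh : aeval v h ≠ 0 := hv.aeval_ne_zero h0
  have hxa := hx.add_mul hv (aeval v a)
  have hnew : χ (v * (x + v * aeval v a)) ∉ L := by
    intro hmem
    obtain ⟨z, u, w, hu, hw, rfl, rfl, hg⟩ := hchain _ hmem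
    have hz : z ≠ 0 := fun hz => hv.1 (by simp [hz])
    have hbase : χ (w + u * aeval (z * u) a) = χ (z * u * (z * w + z * u * aeval (z * u) a)) := by
      rw [← hg (evalProd a) (by
        simp only [Finset.mem_union]
        exact Or.inl (Or.inl (Finset.mem_image.2 ⟨_, hs, rfl⟩))), aeval_evalProd]
    refine hχ ⟨w + u * aeval (z * u) a, z * u * z, hw.add_mul hu _, hv.mul_right hz,
      fun i => ?_, ?_⟩
    · rw [hbase, ← hg (evalProd a + evalSqMul (P i).divX) (by
        simp only [Finset.mem_union]
        exact Or.inl (Or.inr (Finset.mem_image₂.2 ⟨_, hs, i, Finset.mem_univ _, rfl⟩))),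
        map_add, aeval_evalProd, aeval_evalSqMul, aeval_eq_mul_aeval_divX (hP i),
        show z * u * z = z ^ 2 * u by ring]
      congr 1
      ring
    · rw [hbase]
      congr 1
      ring
  refine ⟨v * (x + v * aeval v a), v * (v * aeval v h), hv.mul_right hxa.1,
    hv.mul_right (mul_ne_zero hv.1 hh), insert (χ (v * (x + v * aeval v a))) L,
    by rw [Finset.card_insert_of_notMem hnew, hL], fun s hsL => ?_⟩
  rcases Finset.mem_insert.1 hsL with rfl | hsL
  · refine ⟨1, v * (v * aeval v h), v * (x + v * aeval v a), hv.mul_right (mul_ne_zero hv.1 hh),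
      hv.mul_right hxa.1, (one_mul _).symm, (one_mul _).symm, fun g hg => ?_⟩
    rw [← hmono (evalOneSq g) (Finset.mem_image_of_mem _ hg), map_add,
      aeval_eval_evalOneSq, show v * (v * aeval v h) = v ^ 2 * aeval v h by ring]
    congr 1
    ring
  · obtain ⟨z, u, w, hu, hw, rfl, rfl, hg⟩ := hchain _ hsL
    refine ⟨z ^ 2 * u, u * aeval (z * u) h, w + u * aeval (z * u) a, hu.mul_right hh,
      hw.add_mul hu _, by ring, by ring, fun g hgG => ?_⟩
    rw [← hg (evalProd a + substChain h g) (by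
      simp only [Finset.mem_union]
      exact Or.inr (Finset.mem_image₂.2 ⟨_, hs, g, hgG, rfl⟩)),
      map_add, aeval_evalProd, aeval_substChain]
    congr 1
    ring

theorem stmt0 (k : ℕ) (hk : 0 < k) (P : Fin k → Polynomial ℕ)
    (hP : ∀ i, InT (P i)) (n : ℕ) (χ : Polynomial ℕ → Fin n) :
    ∃ x y : Polynomial ℕ, InT x ∧ InT y ∧
      (∀ i, χ (x + Polynomial.aeval y (P i)) = χ x) ∧ χ (x * y) = χ x := by
  by_contra hχ
  have hX : InT X := ⟨X_ne_zero, coeff_X_zero⟩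
  have chain : ∀ m G, HasColorChain χ m G := by
    intro m
    induction m with
    | zero => exact fun G => ⟨X, X, hX, hX, ∅, by simp⟩
    | succ m ih => exact HasColorChain.succ (fun i => (hP i).2) hχ ih
  obtain ⟨-, -, -, -, L, hL, -⟩ := chain (n + 1) ∅
  have := L.card_le_univ
  rw [hL, Fintype.card_fin] at this
  omega
end

section
/- For every positive integer k, every finite family P_1, …, P_k of nonzero good polynomials in one variable, and every finite coloring of the positive integers, there exist positive integers x and y such that the k+2 numbers x, x + P_1(y), x + P_2(y), …, x + P_k(y), and x·y all receive the same color. -/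
open Polynomial

/-- `A` meets every block of length `k + 1` inside arbitrarily long intervals, for some `k`. -/
def PiecewiseSyndetic (A : Set ℤ) : Prop :=
  ∃ k : ℕ, ∀ n : ℕ, ∃ a : ℤ, ∀ b, a ≤ b → b ≤ a + n → ∃ c ∈ A, b ≤ c ∧ c ≤ b + k

namespace PiecewiseSyndetic

theorem mono {A B : Set ℤ} (hA : PiecewiseSyndetic A) (h : A ⊆ B) : PiecewiseSyndetic B := by
  obtain ⟨k, hk⟩ := hA
  refine ⟨k, fun n => ?_⟩
  obtain ⟨a, ha⟩ := hk n
  refine ⟨a, fun b h₁ h₂ => ?_⟩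
  obtain ⟨c, hc, h₃⟩ := ha b h₁ h₂
  exact ⟨c, h hc, h₃⟩

theorem nonempty {A : Set ℤ} (hA : PiecewiseSyndetic A) : A.Nonempty := by
  obtain ⟨k, hk⟩ := hA
  obtain ⟨a, ha⟩ := hk 0
  obtain ⟨c, hc, -⟩ := ha a le_rfl (by simp)
  exact ⟨c, hc⟩

theorem univ : PiecewiseSyndetic Set.univ :=
  ⟨0, fun _ => ⟨0, fun b _ _ => ⟨b, trivial, by simp⟩⟩⟩

theorem setOf_pos : PiecewiseSyndetic {z : ℤ | 0 < z} :=
  ⟨0, fun _ => ⟨1, fun b hb _ => ⟨b, by simp; omega, by simp⟩⟩⟩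

theorem of_union {A B : Set ℤ} (h : PiecewiseSyndetic (A ∪ B)) :
    PiecewiseSyndetic A ∨ PiecewiseSyndetic B := by
  by_contra! hAB
  obtain ⟨hA, hB⟩ := hAB
  obtain ⟨k, hk⟩ := h
  refine hB ⟨k, fun m => ?_⟩
  have hA' : ∃ n : ℕ, ∀ a : ℤ, ∃ b, a ≤ b ∧ b ≤ a + n ∧ ∀ c ∈ A, b ≤ c → b + (m + k : ℕ) < c := by
    by_contra! hcon
    exact hA ⟨m + k, hcon⟩
  obtain ⟨n, hn⟩ := hA'
  obtain ⟨a, ha⟩ := hk (n + m)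
  obtain ⟨b, hab, hbn, hb⟩ := hn a
  refine ⟨b, fun d h₁ h₂ => ?_⟩
  obtain ⟨c, hc, h₃, h₄⟩ := ha d (by omega) (by push_cast; omega)
  refine ⟨c, hc.resolve_left fun hcA => ?_, h₃, h₄⟩
  have := hb c hcA (by omega)
  push_cast at this
  omega

theorem exists_of_biUnion {ι : Type*} (s : Finset ι) (A : ι → Set ℤ)
    (h : PiecewiseSyndetic (⋃ i ∈ s, A i)) : ∃ i ∈ s, PiecewiseSyndetic (A i) := by
  classical
  induction s using Finset.induction_on with
  | empty => simpa using h.nonempty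
  | insert i s _ ih =>
    rw [Finset.set_biUnion_insert] at h
    rcases h.of_union with h | h
    · exact ⟨i, Finset.mem_insert_self _ _, h⟩
    · obtain ⟨j, hj, hA⟩ := ih h
      exact ⟨j, Finset.mem_insert_of_mem hj, hA⟩

theorem exists_monochromatic {κ : Type*} [Fintype κ] {A : Set ℤ} (hA : PiecewiseSyndetic A)
    (χ : ℤ → κ) : ∃ c, PiecewiseSyndetic {x | x ∈ A ∧ χ x = c} := by
  obtain ⟨c, -, hc⟩ := exists_of_biUnion Finset.univ (fun c => {x | x ∈ A ∧ χ x = c})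
    (hA.mono fun x hx => by simpa using hx)
  exact ⟨c, hc⟩

theorem preimage_add {A : Set ℤ} (hA : PiecewiseSyndetic A) (s : ℤ) :
    PiecewiseSyndetic {x | x + s ∈ A} := by
  obtain ⟨k, hk⟩ := hA
  refine ⟨k, fun n => ?_⟩
  obtain ⟨a, ha⟩ := hk n
  refine ⟨a - s, fun b h₁ h₂ => ?_⟩
  obtain ⟨c, hc, h₃, h₄⟩ := ha (b + s) (by omega) (by omega)
  exact ⟨c - s, by simpa using hc, by omega, by omega⟩

theorem image_mul {A : Set ℤ} (hA : PiecewiseSyndetic A) {y : ℕ} (hy : 0 < y) :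
    PiecewiseSyndetic ((fun x => (y : ℤ) * x) '' A) := by
  obtain ⟨k, hk⟩ := hA
  refine ⟨y * (k + 1), fun n => ?_⟩
  obtain ⟨a, ha⟩ := hk (n + 1)
  have hy' : (0 : ℤ) < y := by exact_mod_cast hy
  refine ⟨y * a, fun b h₁ h₂ => ?_⟩
  have hdiv := Int.mul_ediv_add_emod b y
  have hmod₀ := Int.emod_nonneg b hy'.ne'
  have hmod₁ := Int.emod_lt_of_pos b hy'
  set q := b / (y : ℤ)
  have hq₁ : a ≤ q := by
    by_contra! hlt
    nlinarith
  have hq₂ : q ≤ a + n := by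
    by_contra! hlt
    nlinarith
  obtain ⟨c, hc, h₃, h₄⟩ := ha (q + 1) (by omega) (by push_cast; omega)
  refine ⟨y * c, ⟨c, hc, rfl⟩, by nlinarith, ?_⟩
  push_cast
  nlinarith

end PiecewiseSyndetic

/-- Piecewise syndetic sets return to themselves along the polynomials of `F`. -/
def IsPolynomiallyRecurrent (F : Finset ℤ[X]) : Prop :=
  ∀ A : Set ℤ, PiecewiseSyndetic A →
    ∃ y : ℕ, 0 < y ∧ PiecewiseSyndetic {x | x ∈ A ∧ ∀ f ∈ F, x + f.eval (y : ℤ) ∈ A}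

/-- A recurrence statement for finite colorings of `ℤ` passes to piecewise syndetic sets, by
coloring a syndetic limit of translates of the set. -/
theorem isPolynomiallyRecurrent_of_coloring (F : Finset ℤ[X])
    (h : ∀ (r : ℕ) (χ : ℤ → Fin r), ∃ y : ℕ, 0 < y ∧ ∃ c,
      PiecewiseSyndetic {x | χ x = c ∧ ∀ f ∈ F, χ (x + f.eval (y : ℤ)) = c}) :
    IsPolynomiallyRecurrent F := by
  rintro A ⟨k, hk⟩
  choose a ha using hk
  let U : Ultrafilter ℕ := Filter.hyperfilter ℕ
  let s : ℕ → ℤ := fun n => a (2 * n) + n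
  have key : ∀ z : ℤ, ∃ j : Fin (k + 1), ∀ᶠ n in (U : Filter ℕ), z + j + s n ∈ A := by
    intro z
    have hex : ∀ᶠ n in (U : Filter ℕ), ∃ j : Fin (k + 1), z + j + s n ∈ A := by
      filter_upwards [Nat.hyperfilter_le_atTop (Filter.eventually_ge_atTop z.natAbs)] with n hn
      obtain ⟨c, hc, h₁, h₂⟩ := ha (2 * n) (z + s n) (by simp only [s]; omega)
        (by simp only [s]; push_cast; omega)
      refine ⟨⟨(c - (z + s n)).toNat, by omega⟩, ?_⟩
      have hc' : z + ((c - (z + s n)).toNat : ℤ) + s n = c := by omega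
      simpa only [hc'] using hc
    exact Ultrafilter.eventually_exists_iff.mp hex
  choose χ hχ using key
  obtain ⟨y, hy, c, k', hk'⟩ := h (k + 1) χ
  refine ⟨y, hy, k', fun N => ?_⟩
  obtain ⟨a', ha'⟩ := hk' N
  have hev : ∀ᶠ n in (U : Filter ℕ), ∀ x ∈ Finset.Icc a' (a' + N + k'),
      (χ x = c ∧ ∀ f ∈ F, χ (x + f.eval (y : ℤ)) = c) →
      x + c + s n ∈ A ∧ ∀ f ∈ F, x + c + s n + f.eval (y : ℤ) ∈ A := by
    rw [Filter.eventually_all_finset]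
    intro x _
    by_cases hx : χ x = c ∧ ∀ f ∈ F, χ (x + f.eval (y : ℤ)) = c
    · have h₁ := hχ x
      rw [hx.1] at h₁
      have h₂ : ∀ᶠ n in (U : Filter ℕ), ∀ f ∈ F, x + c + s n + f.eval (y : ℤ) ∈ A := by
        rw [Filter.eventually_all_finset]
        intro f hf
        have h₃ := hχ (x + f.eval (y : ℤ))
        rw [hx.2 f hf] at h₃
        filter_upwards [h₃] with n hn
        convert hn using 1
        ring
      filter_upwards [h₁, h₂] with n h₁ h₂ _
      exact ⟨h₁, h₂⟩
    · exact Filter.Eventually.of_forall fun n hn => absurd hn hx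
  obtain ⟨n, hn⟩ := hev.exists
  refine ⟨a' + c + s n, fun b h₁ h₂ => ?_⟩
  obtain ⟨x, hx, h₃, h₄⟩ := ha' (b - c - s n) (by omega) (by omega)
  exact ⟨x + c + s n, hn x (by rw [Finset.mem_Icc]; omega) hx, by omega, by omega⟩

/-- The number of distinct leading coefficients in each degree. -/
noncomputable def petWeight (F : Finset ℤ[X]) : ℕ →₀ ℕ :=
  Finsupp.onFinset (F.image natDegree)
    (fun d => ((F.filter fun f => f.natDegree = d).image leadingCoeff).card) fun d hd => by
      obtain ⟨c, hc⟩ := Finset.card_pos.mp (Nat.pos_of_ne_zero hd)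
      simp only [Finset.mem_image, Finset.mem_filter] at hc ⊢
      obtain ⟨f, hf, -⟩ := hc
      exact ⟨f, hf⟩

/-- The family to which the PET induction reduces `F`. -/
noncomputable def petDerivative (F : Finset ℤ[X]) (p : ℤ[X]) (H : Finset ℤ) : Finset ℤ[X] :=
  ((F ×ˢ H).image fun q => taylor q.2 q.1 - C (q.1.eval q.2) - p).erase 0

theorem natDegree_leadingCoeff_taylor_sub_C {f : ℤ[X]} (hf : 0 < f.natDegree) (h c : ℤ) :
    (taylor h f - C c).natDegree = f.natDegree ∧
      (taylor h f - C c).leadingCoeff = f.leadingCoeff := by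
  have h₁ : (taylor h f - C c).natDegree = f.natDegree := by
    rw [natDegree_sub_C, natDegree_taylor]
  refine ⟨h₁, ?_⟩
  rw [leadingCoeff, h₁, coeff_sub, coeff_C, if_neg hf.ne', coeff_taylor_natDegree, sub_zero]

theorem petWeight_petDerivative_lt {F : Finset ℤ[X]} (hF : ∀ f ∈ F, 0 < f.natDegree) {p : ℤ[X]}
    (hp : p ∈ F) (hmin : ∀ f ∈ F, p.natDegree ≤ f.natDegree) {H : Finset ℤ} (hH : H.Nonempty) :
    Finsupp.Lex (· > ·) (· < ·) (petWeight (petDerivative F p H)) (petWeight F) := by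
  rw [Finsupp.lex_def]
  have hlarge : ∀ f ∈ F, p.natDegree < f.natDegree → ∀ h : ℤ,
      (taylor h f - C (f.eval h) - p).natDegree = f.natDegree ∧
        (taylor h f - C (f.eval h) - p).leadingCoeff = f.leadingCoeff := by
    intro f hf hlt h
    obtain ⟨h₁, h₂⟩ := natDegree_leadingCoeff_taylor_sub_C (hF f hf) h (f.eval h)
    have h₃ : p.natDegree < (taylor h f - C (f.eval h)).natDegree := by omega
    refine ⟨by rw [natDegree_sub_eq_left_of_natDegree_lt h₃, h₁], ?_⟩
    rw [leadingCoeff_sub_of_degree_lt (degree_lt_degree h₃), h₂]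
  have hsmall : ∀ f ∈ F, f.natDegree = p.natDegree → ∀ h : ℤ,
      (taylor h f - C (f.eval h) - p).natDegree ≤ p.natDegree ∧
        (taylor h f - C (f.eval h) - p).coeff p.natDegree = f.leadingCoeff - p.leadingCoeff := by
    intro f hf heq h
    obtain ⟨h₁, h₂⟩ := natDegree_leadingCoeff_taylor_sub_C (hF f hf) h (f.eval h)
    refine ⟨(natDegree_sub_le _ _).trans (by omega), ?_⟩
    rw [coeff_sub, ← h₂]
    simp only [leadingCoeff, h₁, heq]
  refine ⟨p.natDegree, fun d hd => ?_, ?_⟩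
  · change Finset.card _ = Finset.card _
    congr 1
    ext c
    simp only [petDerivative, Finset.mem_image, Finset.mem_filter, Finset.mem_erase,
      Finset.mem_product, Prod.exists]
    constructor
    · rintro ⟨_, ⟨⟨-, f, h, ⟨hf, -⟩, rfl⟩, hdeg⟩, rfl⟩
      rcases (hmin f hf).lt_or_eq with hlt | heq
      · obtain ⟨h₁, h₂⟩ := hlarge f hf hlt h
        exact ⟨f, ⟨hf, by omega⟩, h₂.symm⟩
      · have := (hsmall f hf heq.symm h).1
        omega
    · rintro ⟨f, ⟨hf, hdeg⟩, rfl⟩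
      obtain ⟨h, hh⟩ := hH
      obtain ⟨h₁, h₂⟩ := hlarge f hf (by omega) h
      refine ⟨_, ⟨⟨fun h₀ => ?_, f, h, ⟨hf, hh⟩, rfl⟩, by omega⟩, h₂⟩
      have := hF f hf
      rw [h₀, natDegree_zero] at h₁
      omega
  · change Finset.card _ < Finset.card _
    have hmem : p.leadingCoeff ∈
        (F.filter fun f => f.natDegree = p.natDegree).image leadingCoeff :=
      Finset.mem_image_of_mem _ (Finset.mem_filter.mpr ⟨hp, rfl⟩)
    refine lt_of_le_of_lt ?_ (Finset.card_erase_lt_of_mem hmem)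
    refine (Finset.card_le_card (t := Finset.image (· - p.leadingCoeff) _) fun c hc => ?_).trans
      Finset.card_image_le
    simp only [petDerivative, Finset.mem_image, Finset.mem_filter, Finset.mem_erase,
      Finset.mem_product, Prod.exists] at hc ⊢
    obtain ⟨_, ⟨⟨hne, f, h, ⟨hf, -⟩, rfl⟩, hdeg⟩, rfl⟩ := hc
    rcases (hmin f hf).lt_or_eq with hlt | heq
    · have := (hlarge f hf hlt h).1
      omega
    · have h₁ := (hsmall f hf heq.symm h).2
      refine ⟨f.leadingCoeff, ⟨fun h₂ => ?_, f, ⟨hf, heq.symm⟩, rfl⟩, ?_⟩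
      · rw [h₂, sub_self, ← hdeg] at h₁
        exact hne (leadingCoeff_eq_zero.mp h₁)
      · rw [← h₁, leadingCoeff, hdeg]

theorem IsPolynomiallyRecurrent.of_erase_zero {F : Finset ℤ[X]}
    (h : IsPolynomiallyRecurrent (F.erase 0)) : IsPolynomiallyRecurrent F := by
  intro A hA
  obtain ⟨y, hy, hD⟩ := h A hA
  refine ⟨y, hy, hD.mono fun x hx => ⟨hx.1, fun f hf => ?_⟩⟩
  by_cases hf₀ : f = 0
  · simpa [hf₀] using hx.1
  · exact hx.2 f (Finset.mem_erase.mpr ⟨hf₀, hf⟩)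

/-- Color focusing: if all derived families are recurrent, then so is every finite coloring
along `F`. -/
theorem exists_monochromatic_of_petDerivative {F : Finset ℤ[X]} {p : ℤ[X]}
    (hF : ∀ f ∈ F, f.coeff 0 = 0)
    (h : ∀ H : Finset ℤ, H.Nonempty → IsPolynomiallyRecurrent (petDerivative F p H))
    {r : ℕ} (χ : ℤ → Fin r) : ∃ y : ℕ, 0 < y ∧ ∃ c,
      PiecewiseSyndetic {x | χ x = c ∧ ∀ f ∈ F, χ (x + f.eval (y : ℤ)) = c} := by
  by_contra hcon
  have focus : ∀ m : ℕ, ∃ (S : Finset (Fin r)) (d : Fin r → ℕ) (B : Set ℤ), S.card = m ∧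
      PiecewiseSyndetic B ∧ ∀ t ∈ S, 0 < d t ∧
        ∀ x ∈ B, ∀ f ∈ F, χ (x + f.eval (d t : ℤ)) = t := by
    intro m
    induction m with
    | zero => exact ⟨∅, fun _ => 0, Set.univ, rfl, .univ, by simp⟩
    | succ m ih =>
      obtain ⟨S, d, B, hS, hB, hd⟩ := ih
      obtain ⟨c, hc⟩ := hB.exists_monochromatic χ
      have hcS : c ∉ S := fun hcS => hcon
        ⟨d c, (hd c hcS).1, c, hc.mono fun x hx => ⟨hx.2, (hd c hcS).2 x hx.1⟩⟩
      let H : Finset ℤ := insert 0 (S.image fun t => (d t : ℤ))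
      obtain ⟨y, hy, hD⟩ :=
        (h H (Finset.insert_nonempty _ _)) {x | x ∈ B ∧ χ x = c} hc
      have hshift : ∀ x : ℤ, (x + p.eval (y : ℤ) ∈ {x | x ∈ B ∧ χ x = c} ∧
          ∀ g ∈ petDerivative F p H, x + p.eval (y : ℤ) + g.eval (y : ℤ) ∈ {x | x ∈ B ∧ χ x = c}) →
          ∀ f ∈ F, ∀ u ∈ H, x + f.eval (y + u) - f.eval u ∈ {x | x ∈ B ∧ χ x = c} := by
        intro x hx f hf u hu
        let g := taylor u f - C (f.eval u) - p
        have hg : g.eval (y : ℤ) = f.eval (y + u) - f.eval u - p.eval (y : ℤ) := by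
          simp [g, taylor_eval]
        have hxg : x + f.eval (y + u) - f.eval u = x + p.eval (y : ℤ) + g.eval (y : ℤ) := by
          rw [hg]; ring
        rw [hxg]
        by_cases hg₀ : g = 0
        · simpa [hg₀] using hx.1
        · refine hx.2 g ?_
          exact Finset.mem_erase.mpr ⟨hg₀, Finset.mem_image.mpr
            ⟨(f, u), Finset.mem_product.mpr ⟨hf, hu⟩, rfl⟩⟩
      refine ⟨insert c S, fun t => if t = c then y else y + d t, _,
        by rw [Finset.card_insert_of_notMem hcS, hS], hD.preimage_add (p.eval (y : ℤ)), ?_⟩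
      intro t ht
      by_cases htc : t = c
      · simp only [htc, if_true]
        refine ⟨hy, fun x hx f hf => ?_⟩
        have h₁ := hshift x hx f hf 0 (Finset.mem_insert_self _ _)
        have h₂ : f.eval 0 = 0 := by rw [← coeff_zero_eq_eval_zero, hF f hf]
        simpa [h₂] using h₁.2
      · have htS := Finset.mem_of_mem_insert_of_ne ht htc
        simp only [htc, if_false]
        refine ⟨by omega, fun x hx f hf => ?_⟩
        have h₁ := hshift x hx f hf (d t) (Finset.mem_insert_of_mem (Finset.mem_image_of_mem _ htS))
        have h₂ := (hd t htS).2 _ h₁.1 f hf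
        simpa using h₂
  obtain ⟨S, -, -, hS, -⟩ := focus (r + 1)
  have := S.card_le_univ
  simp at this
  omega

/-- The piecewise syndetic form of the polynomial van der Waerden theorem. -/
theorem isPolynomiallyRecurrent_of_coeff_zero {F : Finset ℤ[X]} (hF : ∀ f ∈ F, f.coeff 0 = 0) :
    IsPolynomiallyRecurrent F := by
  suffices hmain : ∀ F : Finset ℤ[X], (∀ f ∈ F, f.coeff 0 = 0) → 0 ∉ F →
      IsPolynomiallyRecurrent F from
    (hmain (F.erase 0) (fun f hf => hF f (Finset.mem_of_mem_erase hf))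
      (Finset.notMem_erase _ _)).of_erase_zero
  clear F hF
  intro F
  have hwf : WellFounded (Finsupp.Lex (α := ℕ) (N := ℕ) (· > ·) (· < ·)) :=
    Finsupp.Lex.wellFounded' (fun _ => not_lt_zero) Nat.lt_wfRel.wf Nat.lt_wfRel.wf
  induction F using (InvImage.wf petWeight hwf).induction with
  | _ F ih =>
    intro hF h₀
    rcases F.eq_empty_or_nonempty with rfl | hne
    · exact fun A hA => ⟨1, one_pos, by simpa using hA⟩
    obtain ⟨p, hp, hmin⟩ := F.exists_min_image natDegree hne
    have hpos : ∀ f ∈ F, 0 < f.natDegree := by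
      intro f hf
      by_contra! hdeg
      have hf₀ : f = 0 := by rw [eq_C_of_natDegree_le_zero hdeg, hF f hf, C_0]
      exact h₀ (hf₀ ▸ hf)
    refine isPolynomiallyRecurrent_of_coloring F fun r χ =>
      exists_monochromatic_of_petDerivative (p := p) hF (fun H hH => ?_) χ
    refine ih _ (petWeight_petDerivative_lt hpos hp hmin hH) (fun g hg => ?_)
      (Finset.notMem_erase _ _)
    obtain ⟨⟨f, u⟩, -, rfl⟩ := Finset.mem_image.mp (Finset.mem_of_mem_erase hg)
    simp [taylor_coeff_zero, hF p hp]

theorem stmt1 (k : ℕ) (hk : 0 < k) (P : Fin k → Polynomial ℕ)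
    (hP : ∀ i, P i ≠ 0 ∧ (P i).coeff 0 = 0) (n : ℕ) (χ : ℕ → Fin n) :
    ∃ x y : ℕ, 0 < x ∧ 0 < y ∧
      (∀ i, χ (x + (P i).eval y) = χ x) ∧ χ (x * y) = χ x := by
  by_contra hcon
  have focus : ∀ l : ℕ, ∃ (S : Finset (Fin n)) (m : Fin n → ℕ) (B : Set ℤ), S.card = l ∧
      PiecewiseSyndetic B ∧ (∀ z ∈ B, 0 < z) ∧ ∀ t ∈ S, 0 < m t ∧
        ∀ z ∈ B, ∃ w : ℕ, z = m t * w ∧ χ w = t ∧ ∀ i, χ (w + (P i).eval (m t)) = t := by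
    intro l
    induction l with
    | zero => exact ⟨∅, fun _ => 0, _, rfl, .setOf_pos, fun _ h => h, by simp⟩
    | succ l ih =>
      obtain ⟨S, m, B, hS, hB, hBpos, hm⟩ := ih
      obtain ⟨c, hc⟩ := hB.exists_monochromatic fun z => χ z.toNat
      have hcS : c ∉ S := by
        intro hcS
        obtain ⟨z, hz, hzc⟩ := hc.nonempty
        obtain ⟨w, rfl, hw, hwP⟩ := (hm c hcS).2 z hz
        have hpos := hBpos _ hz
        refine hcon ⟨w, m c, Nat.pos_of_ne_zero fun hw₀ => ?_, (hm c hcS).1,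
          fun i => (hwP i).trans hw.symm, ?_⟩
        · simp [hw₀] at hpos
        · rw [hw, mul_comm]
          exact_mod_cast hzc
      let dilate : ℕ × Fin k → ℤ[X] := fun q =>
        C (q.1 : ℤ) * ((P q.2).map (Nat.castRingHom ℤ)).comp (C (q.1 : ℤ) * X)
      have hdilate : ∀ q (y : ℕ),
          (dilate q).eval (y : ℤ) = ((q.1 * (P q.2).eval (q.1 * y) : ℕ) : ℤ) := by
        intro q y
        have := eval_natCast_map (Nat.castRingHom ℤ) (P q.2) (q.1 * y)
        push_cast at this
        simp [dilate, this]
      let M : Finset ℕ := insert 1 (S.image m)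
      obtain ⟨y, hy, hD⟩ := isPolynomiallyRecurrent_of_coeff_zero
        (F := (M ×ˢ Finset.univ).image dilate) (fun f hf => by
          obtain ⟨q, -, rfl⟩ := Finset.mem_image.mp hf
          have h₁ := hdilate q 0
          have h₂ : (P q.2).eval 0 = 0 := by rw [← coeff_zero_eq_eval_zero, (hP q.2).2]
          rw [coeff_zero_eq_eval_zero]
          simpa [h₂] using h₁) _ hc
      have hret : ∀ u ∈ {x | x ∈ {x | x ∈ B ∧ χ x.toNat = c} ∧
          ∀ f ∈ (M ×ˢ Finset.univ).image dilate, x + f.eval (y : ℤ) ∈ {x | x ∈ B ∧ χ x.toNat = c}}, ∀ a ∈ M, ∀ i,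
          u + (a * (P i).eval (a * y) : ℕ) ∈ {x | x ∈ B ∧ χ x.toNat = c} := by
        intro u hu a ha i
        rw [← hdilate (a, i) y]
        exact hu.2 _ (Finset.mem_image_of_mem _ (Finset.mem_product.mpr ⟨ha, Finset.mem_univ i⟩))
      refine ⟨insert c S, fun t => if t = c then y else y * m t, _,
        by rw [Finset.card_insert_of_notMem hcS, hS], hD.image_mul hy, ?_, ?_⟩
      · rintro _ ⟨u, hu, rfl⟩
        have := hBpos u hu.1.1
        positivity
      intro t ht
      by_cases htc : t = c
      · simp only [htc, if_true]
        refine ⟨hy, ?_⟩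
        rintro _ ⟨u, hu, rfl⟩
        have hupos := hBpos u hu.1.1
        refine ⟨u.toNat, by simp [hupos.le], hu.1.2, fun i => ?_⟩
        have h₁ := (hret u hu 1 (Finset.mem_insert_self _ _) i).2
        rwa [one_mul, one_mul, Int.toNat_add hupos.le (by positivity), Int.toNat_natCast] at h₁
      · have htS := Finset.mem_of_mem_insert_of_ne ht htc
        obtain ⟨hmt, hBt⟩ := hm t htS
        simp only [htc, if_false]
        refine ⟨by positivity, ?_⟩
        rintro _ ⟨u, hu, rfl⟩
        obtain ⟨w, huw, hw, -⟩ := hBt u hu.1.1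
        refine ⟨w, by push_cast; rw [huw, mul_assoc], hw, fun i => ?_⟩
        obtain ⟨v, huv, hv, -⟩ := hBt _
          (hret u hu (m t) (Finset.mem_insert_of_mem (Finset.mem_image_of_mem _ htS)) i).1
        have hvw : v = w + (P i).eval (y * m t) := by
          rw [huw] at huv
          norm_cast at huv
          rw [← mul_add, mul_comm _ y] at huv
          exact (Nat.eq_of_mul_eq_mul_left hmt huv).symm
        rw [← hvw, hv]
  obtain ⟨S, -, -, hS, -⟩ := focus (n + 1)
  have := S.card_le_univ
  simp at this
  omega
end

section
/- For every finite coloring χ of T, every positive integer k, and every positive integer c_k, there exist positive integers c_0 ≥ c_1 ≥ ⋯ ≥ c_{k-1} ≥ c_k, elements b_1, …, b_k ∈ T, and an element x ∈ T with the following property. Setting a_i = b_1·b_2⋯b_i for 1 ≤ i ≤ k: for every i with 0 ≤ i < k and every nonzero good polynomial P in k − i variables of size at most c_i, the element (a_1·a_2⋯a_i)·x + P(a_{i+1}, b_{i+2}, b_{i+3}, …, b_k) receives the same color under χ as (a_1·a_2⋯a_i)·x (where for i = 0 the empty product is omitted, i.e., the elements compared are x + P(a_1, b_2, …, b_k) and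 x). -/
/-- A nonzero good multivariate polynomial of size at most `c`: nonzero, zero constant
term, total degree at most `c`, and all coefficients at most `c`. -/
def GoodOfSize {σ : Type*} (c : ℕ) (P : MvPolynomial σ ℕ) : Prop :=
  P ≠ 0 ∧ MvPolynomial.coeff 0 P = 0 ∧ P.totalDegree ≤ c ∧ ∀ d, MvPolynomial.coeff d P ≤ c

open Polynomial

/-- Uniform polynomial recurrence for the finite set of polynomials `F`: for every finite set of
colors, finitely many steps `d ∈ S` and base points `y ∈ I` suffice to find, in any coloring, a
monochromatic configuration `{y} ∪ {y + p(d) : p ∈ F}`. -/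
def PolyRecurrent {R : Type} [CommRing R] (S : AddSubsemigroup R) (I : Ideal R)
    (F : Finset R[X]) : Prop :=
  ∀ (κ : Type) [Finite κ], ∃ D Y : Finset R, (∀ d ∈ D, d ∈ S) ∧ (∀ y ∈ Y, y ∈ I) ∧
    ∀ χ : R → κ, ∃ d ∈ D, ∃ y ∈ Y, ∀ p ∈ F, χ (y + p.eval d) = χ y

lemma eval_mem_of_coeff_zero {R : Type} [CommRing R] {I : Ideal R} {p : R[X]}
    (hp : p.coeff 0 = 0) {d : R} (hd : d ∈ I) : p.eval d ∈ I := by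
  obtain ⟨q, rfl⟩ := X_dvd_iff.mpr hp
  simpa using I.mul_mem_right _ hd

/-- The difference operator used to lower the complexity of a system of polynomials. -/
noncomputable def shiftDiff {R : Type} [CommRing R] (p₁ p : R[X]) (d : R) : R[X] :=
  taylor d p - C (p.eval d) - p₁

lemma eval_shiftDiff {R : Type} [CommRing R] (p₁ p : R[X]) (d x : R) :
    (shiftDiff p₁ p d).eval x = p.eval (x + d) - p.eval d - p₁.eval x := by
  simp [shiftDiff, taylor_eval]

lemma coeff_zero_shiftDiff {R : Type} [CommRing R] {p₁ : R[X]} (h₁ : p₁.coeff 0 = 0)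
    (p : R[X]) (d : R) : (shiftDiff p₁ p d).coeff 0 = 0 := by
  simp [shiftDiff, taylor_coeff_zero, h₁]

/-- Color focusing: if the system of all `shiftDiff p₁ p d` is recurrent for every finite
set of shifts `d`, then so is the original system. -/
lemma polyRecurrent_of_shiftDiff {R : Type} [CommRing R] [DecidableEq R]
    {S : AddSubsemigroup R} {I : Ideal R} (hSI : ∀ d ∈ S, d ∈ I) {F : Finset R[X]}
    (hF : ∀ p ∈ F, p.coeff 0 = 0) {p₁ : R[X]} (hp₁ : p₁ ∈ F)
    (h : ∀ D : Finset R,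
      PolyRecurrent S I (Finset.image₂ (shiftDiff p₁) F (insert 0 D))) :
    PolyRecurrent S I F := by
  intro κ _
  have focus : ∀ r : ℕ, ∃ D Y : Finset R, (∀ d ∈ D, d ∈ S) ∧ (∀ y ∈ Y, y ∈ I) ∧
      ∀ χ : R → κ, ∃ y ∈ Y, (∃ d ∈ D, ∀ p ∈ F, χ (y + p.eval d) = χ y) ∨
        ∃ K : Finset κ, K.card = r ∧ ∀ c ∈ K, ∃ d ∈ D, ∀ p ∈ F, χ (y + p.eval d) = c := by
    classical
    intro r
    induction r with
    | zero =>
      exact ⟨∅, {0}, by simp, by simp, fun χ => ⟨0, by simp, Or.inr ⟨∅, by simp⟩⟩⟩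
    | succ r ih =>
      obtain ⟨D, Y, hD, hY, hDY⟩ := ih
      obtain ⟨D', Y', hD', hY', hDY'⟩ :=
        h D (Y × F × (insert 0 D : Finset R) → κ)
      refine ⟨(D ∪ D') ∪ Finset.image₂ (· + ·) D D', Finset.image₂ (· + ·) Y' Y ∪
        Finset.image₂ (fun y d => y - p₁.eval d) (Finset.image₂ (· + ·) Y' Y) D', ?_, ?_, ?_⟩
      · intro d hd
        rcases Finset.mem_union.mp hd with hd | hd
        · exact (Finset.mem_union.mp hd).elim (hD d) (hD' d)
        · obtain ⟨a, ha, b, hb, rfl⟩ := Finset.mem_image₂.mp hd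
          exact S.add_mem (hD a ha) (hD' b hb)
      · have hsum : ∀ y ∈ Finset.image₂ (· + ·) Y' Y, y ∈ I := by
          intro y hy
          obtain ⟨a, ha, b, hb, rfl⟩ := Finset.mem_image₂.mp hy
          exact I.add_mem (hY' a ha) (hY b hb)
        intro y hy
        rcases Finset.mem_union.mp hy with hy | hy
        · exact hsum y hy
        · obtain ⟨a, ha, b, hb, rfl⟩ := Finset.mem_image₂.mp hy
          exact I.sub_mem (hsum a ha)
            (eval_mem_of_coeff_zero (hF p₁ hp₁) (hSI b (hD' b hb)))
      · intro χ
        obtain ⟨d', hd', a', ha', hω⟩ := hDY' fun a u => χ (a + (u.1.1 + u.2.1.1.eval u.2.2.1))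
        obtain ⟨y, hy, hyχ⟩ := hDY fun u => χ (a' + u)
        have hsum : a' + y ∈ Finset.image₂ (· + ·) Y' Y := Finset.mem_image₂_of_mem ha' hy
        have key : ∀ p ∈ F, ∀ d ∈ insert 0 D,
            χ (a' + y - p₁.eval d' + p.eval (d + d')) = χ (a' + (y + p.eval d)) := by
          intro p hp d hd
          have := congrFun (hω _ (Finset.mem_image₂_of_mem hp hd)) (⟨y, hy⟩, ⟨p, hp⟩, ⟨d, hd⟩)
          simp only [eval_shiftDiff] at this
          rw [← this]
          congr 1
          rw [add_comm d d']
          ring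
        rcases hyχ with ⟨d, hd, hsucc⟩ | ⟨K, hK, hKχ⟩
        · refine ⟨a' + y, Finset.mem_union_left _ hsum, Or.inl ?_⟩
          exact ⟨d, Finset.mem_union_left _ (Finset.mem_union_left _ hd), fun p hp => by
            rw [add_assoc, hsucc p hp]⟩
        · by_cases hc : χ (a' + y) ∈ K
          · obtain ⟨d, hd, hdc⟩ := hKχ _ hc
            refine ⟨a' + y, Finset.mem_union_left _ hsum, Or.inl ?_⟩
            exact ⟨d, Finset.mem_union_left _ (Finset.mem_union_left _ hd), fun p hp => by
              rw [add_assoc, hdc p hp]⟩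
          · refine ⟨a' + y - p₁.eval d', Finset.mem_union_right _
              (Finset.mem_image₂_of_mem hsum hd'), Or.inr ⟨insert (χ (a' + y)) K, ?_, ?_⟩⟩
            · rw [Finset.card_insert_of_notMem hc, hK]
            · intro c hcK
              rcases Finset.mem_insert.mp hcK with rfl | hcK
              · refine ⟨d', Finset.mem_union_left _ (Finset.mem_union_right _ hd'), fun p hp => ?_⟩
                have := key p hp 0 (Finset.mem_insert_self _ _)
                rwa [zero_add, ← coeff_zero_eq_eval_zero, hF p hp, add_zero] at this
              · obtain ⟨d, hd, hdc⟩ := hKχ c hcK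
                refine ⟨d + d', Finset.mem_union_right _ (Finset.mem_image₂_of_mem hd hd'),
                  fun p hp => ?_⟩
                rw [key p hp d (Finset.mem_insert_of_mem hd), hdc p hp]
  have := Fintype.ofFinite κ
  obtain ⟨D, Y, hD, hY, hDY⟩ := focus (Fintype.card κ + 1)
  refine ⟨D, Y, hD, hY, fun χ => ?_⟩
  obtain ⟨y, hy, ⟨d, hd, hdy⟩ | ⟨K, hK, -⟩⟩ := hDY χ
  · exact ⟨d, hd, y, hy, hdy⟩
  · have := K.card_le_univ
    omega

/-- How `shiftDiff p₁` acts on the pair (degree, leading coefficient) when `p₁` has minimal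
degree. -/
lemma shiftDiff_degree_leadingCoeff {R : Type} [CommRing R] {p₁ p : R[X]}
    (h₁ : 0 < p₁.natDegree) (hle : p₁.natDegree ≤ p.natDegree) (d : R)
    (hne : shiftDiff p₁ p d ≠ 0) :
    (shiftDiff p₁ p d).natDegree < p₁.natDegree ∨
      ((p.natDegree, p.leadingCoeff) ≠ (p₁.natDegree, p₁.leadingCoeff) ∧
        (shiftDiff p₁ p d).natDegree = p.natDegree ∧
        (shiftDiff p₁ p d).leadingCoeff =
          if p.natDegree = p₁.natDegree then p.leadingCoeff - p₁.leadingCoeff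
          else p.leadingCoeff) := by
  set g := taylor d p - C (p.eval d) with hg
  have hs : shiftDiff p₁ p d = g - p₁ := rfl
  have hgd : g.natDegree = p.natDegree := by rw [hg, natDegree_sub_C, natDegree_taylor]
  have hgl : g.leadingCoeff = p.leadingCoeff := by
    rw [leadingCoeff, hgd, hg, coeff_sub, coeff_C_of_ne_zero (by omega), sub_zero,
      coeff_taylor_natDegree]
  rw [hs] at hne ⊢
  rcases hle.lt_or_eq with hlt | heq
  · right
    have hlt' : p₁.natDegree < g.natDegree := hgd ▸ hlt
    refine ⟨fun h => hlt.ne' (congrArg Prod.fst h), ?_, ?_⟩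
    · rw [natDegree_sub_eq_left_of_natDegree_lt hlt', hgd]
    · rw [if_neg hlt.ne', leadingCoeff_sub_of_degree_lt (degree_lt_degree hlt'), hgl]
  · by_cases hl : p.leadingCoeff = p₁.leadingCoeff
    · left
      have hp0 : p₁ ≠ 0 := by rintro rfl; simp at h₁
      have hg0 : g ≠ 0 := by rintro h; rw [h] at hgd; simp at hgd; omega
      refine (natDegree_lt_natDegree hne (degree_sub_lt_left ?_ hg0 (hgl.trans hl))).trans_eq
        (hgd.trans heq.symm)
      rw [degree_eq_natDegree hg0, degree_eq_natDegree hp0, hgd, heq]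
    · right
      have hc : (g - p₁).coeff p.natDegree = p.leadingCoeff - p₁.leadingCoeff := by
        rw [coeff_sub, ← hgd, coeff_natDegree, hgl, hgd, ← heq, coeff_natDegree]
      have hd : (g - p₁).natDegree = p.natDegree := by
        refine le_antisymm ((natDegree_sub_le _ _).trans (by simp [hgd, heq])) ?_
        exact le_natDegree_of_ne_zero (hc ▸ sub_ne_zero.mpr hl)
      refine ⟨fun h => hl (congrArg Prod.snd h), hd, ?_⟩
      rw [if_pos heq.symm, leadingCoeff, hd, hc]

/-- Polynomial van der Waerden theorem, by induction on the multiset of degrees of the classes of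
polynomials with the same degree and leading coefficient. -/
theorem polyRecurrent_of_coeff_zero {R : Type} [CommRing R] {S : AddSubsemigroup R}
    {I : Ideal R} (hSI : ∀ d ∈ S, d ∈ I) (hS : ∃ d, d ∈ S) (F : Finset R[X])
    (hF : ∀ p ∈ F, p.coeff 0 = 0) : PolyRecurrent S I F := by
  classical
  suffices H : ∀ (s : Multiset ℕ) (M : Multiset (ℕ × R)), M.map Prod.fst = s →
      ∀ F : Finset R[X], (∀ p ∈ F, p.coeff 0 = 0) →
        (∀ p ∈ F, p ≠ 0 → (p.natDegree, p.leadingCoeff) ∈ M) → PolyRecurrent S I F from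
    H _ (F.val.map fun p => (p.natDegree, p.leadingCoeff)) rfl F hF
      fun p hp _ => Multiset.mem_map_of_mem _ hp
  intro s
  induction s using (Multiset.wellFounded_isDershowitzMannaLT (α := ℕ)).induction with
  | _ s ih =>
  rintro M rfl F hF hM
  suffices hnz : PolyRecurrent S I (F.erase 0) by
    intro κ _
    obtain ⟨D, Y, hD, hY, hDY⟩ := hnz κ
    refine ⟨D, Y, hD, hY, fun χ => ?_⟩
    obtain ⟨d, hd, y, hy, hdy⟩ := hDY χ
    refine ⟨d, hd, y, hy, fun p hp => ?_⟩
    by_cases hp0 : p = 0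
    · simp [hp0]
    · exact hdy p (Finset.mem_erase.mpr ⟨hp0, hp⟩)
  rcases (F.erase 0).eq_empty_or_nonempty with hE | hE
  · obtain ⟨d, hd⟩ := hS
    intro κ _
    exact ⟨{d}, {0}, by simpa using hd, by simp, fun χ => ⟨d, by simp, 0, by simp, by simp [hE]⟩⟩
  obtain ⟨p₁, hp₁, hmin⟩ := Finset.exists_min_image (F.erase 0) natDegree hE
  have hF' : ∀ p ∈ F.erase 0, p.coeff 0 = 0 := fun p hp => hF p (Finset.mem_of_mem_erase hp)
  have hp₁M := hM p₁ (Finset.mem_of_mem_erase hp₁) (Finset.ne_of_mem_erase hp₁)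
  have hpos : 0 < p₁.natDegree := by
    refine Nat.pos_of_ne_zero fun h => Finset.ne_of_mem_erase hp₁ ?_
    rw [eq_C_of_natDegree_eq_zero h, hF' p₁ hp₁, C_0]
  refine polyRecurrent_of_shiftDiff hSI hF' hp₁ fun D => ?_
  set F' := Finset.image₂ (shiftDiff p₁) (F.erase 0) (insert 0 D)
  set N := M.erase (p₁.natDegree, p₁.leadingCoeff)
  set L := (F'.filter fun q => q.natDegree < p₁.natDegree).val.map
    fun q => (q.natDegree, q.leadingCoeff)
  set N' := N.map fun u => (u.1, if u.1 = p₁.natDegree then u.2 - p₁.leadingCoeff else u.2)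
  refine ih ((N' + L).map Prod.fst) ?_ (N' + L) rfl F' ?_ ?_
  · refine ⟨N.map Prod.fst, L.map Prod.fst, {p₁.natDegree}, by simp, ?_, ?_, ?_⟩
    · simp [N']
    · rw [← Multiset.cons_erase hp₁M, Multiset.map_cons, ← Multiset.singleton_add, add_comm]
    · intro e he
      simp only [L, Multiset.map_map, Multiset.mem_map, Finset.mem_val, Finset.mem_filter] at he
      obtain ⟨q, ⟨-, hq⟩, rfl⟩ := he
      exact ⟨_, Multiset.mem_singleton_self _, hq⟩
  · intro q hq
    obtain ⟨p, -, d, -, rfl⟩ := Finset.mem_image₂.mp hq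
    exact coeff_zero_shiftDiff (hF' p₁ hp₁) p d
  · intro q hq hq0
    obtain ⟨p, hp, d, -, rfl⟩ := Finset.mem_image₂.mp hq
    rw [Multiset.mem_add]
    rcases shiftDiff_degree_leadingCoeff hpos (hmin p hp) d hq0 with hlt | ⟨hne, hdeg, hlead⟩
    · exact Or.inr (Multiset.mem_map_of_mem _ (Finset.mem_filter.mpr ⟨hq, hlt⟩))
    · left
      have hpM := hM p (Finset.mem_of_mem_erase hp) (Finset.ne_of_mem_erase hp)
      rw [hdeg, hlead]
      exact Multiset.mem_map.mpr ⟨_, (Multiset.mem_erase_of_ne hne).mpr hpM, rfl⟩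

lemma InT.add {p q : ℕ[X]} (hp : InT p) (hq : q.coeff 0 = 0) : InT (p + q) := by
  refine ⟨fun h => hp.1 ?_, by simp [hp.2, hq]⟩
  ext m
  have := congrArg (fun r : ℕ[X] => r.coeff m) h
  simp only [coeff_add, coeff_zero] at this ⊢
  omega

lemma inT_X : InT (X : ℕ[X]) := ⟨X_ne_zero, by simp⟩

/-- Polynomial van der Waerden theorem in the semiring of good polynomials. -/
theorem exists_finset_inT_recurrent (F : Finset ℕ[X][X]) (hF : ∀ f ∈ F, f.coeff 0 = 0)
    (κ : Type) [Finite κ] :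
    ∃ D Y : Finset ℕ[X], (∀ d ∈ D, InT d) ∧ (∀ y ∈ Y, InT y) ∧
      ∀ χ : ℕ[X] → κ, ∃ d ∈ D, ∃ y ∈ Y, ∀ f ∈ F, χ (y + f.eval d) = χ y := by
  classical
  set φ : ℕ[X] →+* ℤ[X] := mapRingHom (Nat.castRingHom ℤ) with hφ
  have hinj : Function.Injective φ := map_injective _ Nat.cast_injective
  have hcoeff : ∀ (p : ℕ[X]) m, (φ p).coeff m = p.coeff m := fun p m => by simp [hφ]
  let S : AddSubsemigroup ℤ[X] :=
    { carrier := {z | ∃ d, InT d ∧ φ d = z}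
      add_mem' := by
        rintro _ _ ⟨a, ha, rfl⟩ ⟨b, hb, rfl⟩
        exact ⟨a + b, ha.add hb.2, map_add _ _ _⟩ }
  have hSI : ∀ d ∈ S, d ∈ Ideal.span {(X : ℤ[X])} := by
    rintro _ ⟨d, hd, rfl⟩
    rw [Ideal.mem_span_singleton, X_dvd_iff, hcoeff, hd.2, Nat.cast_zero]
  obtain ⟨D, Y, hD, hY, hDY⟩ := polyRecurrent_of_coeff_zero hSI ⟨_, X, inT_X, rfl⟩
    (F.image (Polynomial.map φ))
    (by
      intro p hp
      obtain ⟨f, hf, rfl⟩ := Finset.mem_image.mp hp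
      rw [coeff_map, hF f hf, map_zero]) κ
  have hneg : ∀ y ∈ Y, ∃ u : ℕ[X], u.coeff 0 = 0 ∧ ∃ v : ℕ[X], v.coeff 0 = 0 ∧ y + φ u = φ v := by
    intro y hy
    have hy0 : y.coeff 0 = 0 := X_dvd_iff.mp (Ideal.mem_span_singleton.mp (hY y hy))
    refine ⟨∑ m ∈ y.support, monomial m (-y.coeff m).toNat, ?_,
      ∑ m ∈ y.support, monomial m (y.coeff m).toNat, ?_, ?_⟩
    · simp [coeff_monomial, hy0]
    · simp [coeff_monomial, hy0]
    · ext m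
      rw [coeff_add, hcoeff, hcoeff]
      simp only [finsetSum_coeff, coeff_monomial, Finset.sum_ite_eq', mem_support_iff]
      split_ifs with h
      · omega
      · simp only [not_not] at h
        simp [h]
  choose! u hu0 v hv0 huv using hneg
  have hshift : ∀ y ∈ Y, ∃ w, InT w ∧ y + φ (X + ∑ y ∈ Y, u y) = φ w := by
    intro y hy
    refine ⟨X + (v y + ∑ y ∈ Y.erase y, u y), inT_X.add ?_, ?_⟩
    · rw [coeff_add, hv0 y hy, finsetSum_coeff,
        Finset.sum_eq_zero fun z hz => hu0 z (Finset.mem_of_mem_erase hz), add_zero]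
    · rw [← Finset.add_sum_erase Y u hy]
      simp only [map_add, ← huv y hy]
      ring
  choose! w hw hwy using hshift
  have hD' : ∀ d ∈ D, ∃ e, InT e ∧ φ e = d := hD
  choose! e he hed using hD'
  refine ⟨D.image e, Y.image w, by simpa using he, by simpa using hw, fun χ => ?_⟩
  obtain ⟨d, hd, y, hy, hdy⟩ :=
    hDY fun z => χ (Function.invFun φ (z + φ (X + ∑ y ∈ Y, u y)))
  refine ⟨e d, Finset.mem_image_of_mem e hd, w y, Finset.mem_image_of_mem w hy, fun f hf => ?_⟩
  have := hdy _ (Finset.mem_image_of_mem _ hf)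
  have hev : (f.map φ).eval d = φ (f.eval (e d)) := by
    conv_lhs => rw [← hed d hd, eval_map_apply]
  rwa [hev, add_right_comm, hwy y hy, ← map_add, Function.leftInverse_invFun hinj,
    Function.leftInverse_invFun hinj] at this

/-- The multiplier `a 1 * ⋯ * a i`, where `a j = b 1 * ⋯ * b j`. -/
noncomputable def multiplier (b : ℕ → ℕ[X]) (i : ℕ) : ℕ[X] :=
  ∏ j ∈ Finset.Icc 1 i, ∏ l ∈ Finset.Icc 1 j, b l

/-- The sequence `a (i+1), b (i+2), …, b k, 0, 0, …`. -/
noncomputable def tailValues (b : ℕ → ℕ[X]) (k i v : ℕ) : ℕ[X] :=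
  if i + 1 + v ≤ k then
    if v = 0 then ∏ l ∈ Finset.Icc 1 (i + 1), b l else b (i + 1 + v)
  else 0

lemma prod_Icc_update {b : ℕ → ℕ[X]} {k j : ℕ} (hj : j ≤ k) (q : ℕ[X]) :
    ∏ l ∈ Finset.Icc 1 j, Function.update b (k + 1) q l = ∏ l ∈ Finset.Icc 1 j, b l := by
  refine Finset.prod_congr rfl fun l hl => Function.update_of_ne ?_ _ _
  have := (Finset.mem_Icc.mp hl).2
  omega

lemma multiplier_update {b : ℕ → ℕ[X]} {k i : ℕ} (hi : i ≤ k) (q : ℕ[X]) :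
    multiplier (Function.update b (k + 1) q) i = multiplier b i :=
  Finset.prod_congr rfl fun _ hj => prod_Icc_update ((Finset.mem_Icc.mp hj).2.trans hi) q

lemma multiplier_ne_zero {b : ℕ → ℕ[X]} (hb : ∀ i, InT (b i)) (i : ℕ) : multiplier b i ≠ 0 :=
  Finset.prod_ne_zero_iff.mpr fun _ _ => Finset.prod_ne_zero_iff.mpr fun l _ => (hb l).1

lemma tailValues_self (b : ℕ → ℕ[X]) (k : ℕ) : tailValues b k k = 0 := by
  funext v
  exact if_neg (by omega)

/-- Adjoining a new entry `N * d`, with `N` a multiple of `multiplier b i`, perturbs the tail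
values by multiples of `multiplier b i * d`. -/
lemma exists_tailValues_update (b : ℕ → ℕ[X]) {k i : ℕ} (hi : i ≤ k) {N : ℕ[X]}
    (hN : multiplier b i ∣ N) :
    ∃ g : ℕ → ℕ[X], ∀ d, tailValues (Function.update b (k + 1) (N * d)) (k + 1) i =
      fun v => tailValues b k i v + multiplier b i * (g v * d) := by
  obtain ⟨h, rfl⟩ := hN
  refine ⟨fun v => if i + 1 + v = k + 1 then
    if v = 0 then (∏ l ∈ Finset.Icc 1 k, b l) * h else h else 0, fun d => ?_⟩
  funext v
  unfold tailValues
  rcases lt_trichotomy (i + 1 + v) (k + 1) with hlt | heq | hgt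
  · have hle : i + 1 + v ≤ k := by omega
    simp only [if_pos hlt.le, if_pos hle, if_neg hlt.ne, Function.update_of_ne hlt.ne,
      prod_Icc_update (show i + 1 ≤ k by omega)]
    ring
  · have hle : ¬ i + 1 + v ≤ k := by omega
    simp only [if_pos heq.le, if_neg hle, if_pos heq]
    split_ifs with hv
    · obtain rfl : i = k := by omega
      rw [Finset.prod_Icc_succ_top (by omega), prod_Icc_update le_rfl, Function.update_self]
      ring
    · rw [heq, Function.update_self]
      ring
  · have hle : ¬ i + 1 + v ≤ k := by omega
    simp only [if_neg hgt.not_ge, if_neg hle, if_neg hgt.ne']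
    ring

/-- Perturbing the arguments of a polynomial by multiples of `m * d` changes its value by `m` times
a polynomial in `d` with zero constant term. -/
lemma exists_aeval_add_mul (P : MvPolynomial ℕ ℕ) (e g : ℕ → ℕ[X]) (m : ℕ[X]) :
    ∃ Q : ℕ[X][X], Q.coeff 0 = 0 ∧ ∀ d : ℕ[X],
      MvPolynomial.aeval (fun v => e v + m * (g v * d)) P =
        MvPolynomial.aeval e P + m * Q.eval d := by
  induction P using MvPolynomial.induction_on with
  | C r => exact ⟨0, by simp, fun d => by simp⟩
  | add p q hp hq =>
    obtain ⟨Q, hQ, hp⟩ := hp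
    obtain ⟨Q', hQ', hq⟩ := hq
    refine ⟨Q + Q', by simp [hQ, hQ'], fun d => ?_⟩
    rw [map_add, map_add, hp, hq, eval_add]
    ring
  | mul_X p v hp =>
    obtain ⟨Q, hQ, hp⟩ := hp
    refine ⟨Q * C (e v) + (C (MvPolynomial.aeval e p) + C m * Q) * (C (g v) * X),
      by simp [hQ, mul_coeff_zero], fun d => ?_⟩
    rw [map_mul, map_mul, hp]
    simp only [MvPolynomial.aeval_X, eval_add, eval_mul, eval_C, eval_X]
    ring

/-- Finitary version of the main theorem, for a family of colorings indexed by the multiplier. -/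
theorem exists_finset_monochromatic_tails (A : Finset (MvPolynomial ℕ ℕ))
    (hA : ∀ P ∈ A, MvPolynomial.coeff 0 P = 0) (κ : Type) [Finite κ] (k : ℕ) :
    ∃ W : Finset ((ℕ → ℕ[X]) × ℕ[X]), (∀ w ∈ W, (∀ i, InT (w.1 i)) ∧ InT w.2) ∧
      ∀ χ : ℕ[X] → ℕ[X] → κ, ∃ w ∈ W, ∀ i < k, ∀ P ∈ A,
        χ (multiplier w.1 i)
            (multiplier w.1 i * w.2 + MvPolynomial.aeval (tailValues w.1 k i) P) =
          χ (multiplier w.1 i) (multiplier w.1 i * w.2) := by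
  classical
  induction k with
  | zero => exact ⟨{(fun _ => X, X)}, by simp [inT_X], fun χ => ⟨(fun _ => X, X), by simp, by simp⟩⟩
  | succ k ih =>
    obtain ⟨W, hW, hWχ⟩ := ih
    set N := ∏ w ∈ W, ∏ i ∈ Finset.range (k + 1), multiplier w.1 i
    have hN0 : N ≠ 0 := Finset.prod_ne_zero_iff.mpr fun w hw =>
      Finset.prod_ne_zero_iff.mpr fun i _ => multiplier_ne_zero (hW w hw).1 i
    have hdvd : ∀ w ∈ W, ∀ i ≤ k, multiplier w.1 i ∣ N := fun w hw i hi =>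
      (Finset.dvd_prod_of_mem (multiplier w.1) (Finset.mem_range_succ_iff.mpr hi)).trans
        (Finset.dvd_prod_of_mem
          (fun w : (ℕ → ℕ[X]) × ℕ[X] => ∏ i ∈ Finset.range (k + 1), multiplier w.1 i) hw)
    have hQ : ∀ u : W × Fin (k + 1) × A, ∃ Q : ℕ[X][X], Q.coeff 0 = 0 ∧ ∀ d : ℕ[X],
        MvPolynomial.aeval
            (tailValues (Function.update u.1.1.1 (k + 1) (N * d)) (k + 1) u.2.1) u.2.2.1 =
          MvPolynomial.aeval (tailValues u.1.1.1 k u.2.1) u.2.2.1 +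
            multiplier u.1.1.1 u.2.1 * Q.eval d := by
      rintro ⟨⟨w, hw⟩, ⟨i, hi⟩, ⟨P, hP⟩⟩
      have hi' : i ≤ k := by omega
      obtain ⟨g, hg⟩ := exists_tailValues_update w.1 hi' (hdvd w hw i hi')
      obtain ⟨Q, hQ0, hQ⟩ := exists_aeval_add_mul P (tailValues w.1 k i) g (multiplier w.1 i)
      exact ⟨Q, hQ0, fun d => by rw [← hQ d, ← hg d]⟩
    choose Q hQ0 hQ using hQ
    obtain ⟨D, Y, hD, hY, hDY⟩ := exists_finset_inT_recurrent (Finset.univ.image Q)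
      (fun f hf => by
        obtain ⟨u, -, rfl⟩ := Finset.mem_image.mp hf
        exact hQ0 u)
      (W × Fin (k + 1) × A → κ)
    refine ⟨Finset.image₂ (fun w u => (Function.update w.1 (k + 1) (N * u.1), w.2 + u.2))
      W (D ×ˢ Y), ?_, fun χ => ?_⟩
    · intro w' hw'
      obtain ⟨w, hw, ⟨d, y⟩, hu, rfl⟩ := Finset.mem_image₂.mp hw'
      obtain ⟨hd, hy⟩ := Finset.mem_product.mp hu
      refine ⟨fun i => ?_, (hW w hw).2.add (hY y hy).2⟩
      by_cases hi : i = k + 1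
      · subst hi
        simp only [Function.update_self]
        exact ⟨mul_ne_zero hN0 (hD d hd).1, by simp [mul_coeff_zero, (hD d hd).2]⟩
      · simp only [Function.update_of_ne hi]
        exact (hW w hw).1 i
    · obtain ⟨d, hd, y, hy, hdy⟩ := hDY fun y u => χ (multiplier u.1.1.1 u.2.1)
        (multiplier u.1.1.1 u.2.1 * u.1.1.2 +
          MvPolynomial.aeval (tailValues u.1.1.1 k u.2.1) u.2.2.1 + multiplier u.1.1.1 u.2.1 * y)
      obtain ⟨w, hw, hwχ⟩ := hWχ fun m z => χ m (z + m * y)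
      refine ⟨_, Finset.mem_image₂_of_mem hw (Finset.mk_mem_product hd hy),
        fun i hi P hP => ?_⟩
      have hi' : i ≤ k := by omega
      have hstep := congrFun (hdy _ (Finset.mem_image_of_mem Q
        (Finset.mem_univ (⟨w, hw⟩, ⟨i, hi⟩, ⟨P, hP⟩)))) (⟨w, hw⟩, ⟨i, hi⟩, ⟨P, hP⟩)
      have hold : χ (multiplier w.1 i) (multiplier w.1 i * w.2 +
          MvPolynomial.aeval (tailValues w.1 k i) P + multiplier w.1 i * y) =
          χ (multiplier w.1 i) (multiplier w.1 i * w.2 + multiplier w.1 i * y) := by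
        rcases hi'.lt_or_eq with hlt | rfl
        · exact hwχ i hlt P hP
        · have hP0 : MvPolynomial.aeval (0 : ℕ → ℕ[X]) P = 0 := by
            rw [MvPolynomial.aeval_zero, MvPolynomial.constantCoeff_eq, hA P hP, map_zero]
          rw [tailValues_self, hP0, add_zero]
      simp only [multiplier_update hi']
      rw [hQ (⟨w, hw⟩, ⟨i, hi⟩, ⟨P, hP⟩) d, mul_add, ← hold, ← hstep]
      congr 1
      ring

lemma finite_setOf_goodOfSize {σ : Type} [Finite σ] (c : ℕ) :
    {P : MvPolynomial σ ℕ | GoodOfSize c P}.Finite := by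
  have hfin : {d : σ →₀ ℕ | d.degree ≤ c}.Finite := Finsupp.finite_of_degree_le c
  have : Finite {d : σ →₀ ℕ | d.degree ≤ c} := hfin
  refine Set.Finite.of_finite_image (f := fun P (d : {d : σ →₀ ℕ | d.degree ≤ c}) =>
    MvPolynomial.coeff d.1 P) ((Set.Finite.pi' fun _ => Set.finite_Iic c).subset ?_) ?_
  · rintro _ ⟨P, hP, rfl⟩ d
    exact hP.2.2.2 d.1
  · intro P hP P' hP' h
    have hzero : ∀ P : MvPolynomial σ ℕ, GoodOfSize c P → ∀ d : σ →₀ ℕ, ¬ d.degree ≤ c →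
        MvPolynomial.coeff d P = 0 := by
      intro P hP d hd
      by_contra hne
      exact hd ((MvPolynomial.le_totalDegree (MvPolynomial.mem_support_iff.mpr hne)).trans
        hP.2.2.1)
    ext d
    by_cases hd : d.degree ≤ c
    · exact congrFun h ⟨d, hd⟩
    · rw [hzero P hP d hd, hzero P' hP' d hd]

theorem stmt6 (n : ℕ) (χ : Polynomial ℕ → Fin n) (k : ℕ) (hk : 0 < k)
    (ck : ℕ) (hck : 0 < ck) :
    ∃ c : ℕ → ℕ,
      (∀ i ≤ k, 0 < c i) ∧ (∀ i < k, c (i + 1) ≤ c i) ∧ c k = ck ∧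
      ∃ b : ℕ → Polynomial ℕ, (∀ i, 1 ≤ i → i ≤ k → InT (b i)) ∧
      ∃ x : Polynomial ℕ, InT x ∧
        -- with `a i = b 1 * b 2 * ⋯ * b i = ∏ l ∈ Finset.Icc 1 i, b l`,
        -- for every `0 ≤ i < k` and every nonzero good polynomial `P` in `k - i`
        -- variables of size at most `c i`, the element
        -- `(a 1 * ⋯ * a i) * x + P (a (i+1), b (i+2), …, b k)` has the same color
        -- as `(a 1 * ⋯ * a i) * x`.
        ∀ i < k, ∀ P : MvPolynomial (Fin (k - i)) ℕ, GoodOfSize (c i) P →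
          χ ((∏ j ∈ Finset.Icc 1 i, ∏ l ∈ Finset.Icc 1 j, b l) * x +
              MvPolynomial.aeval
                (fun v : Fin (k - i) =>
                  if (v : ℕ) = 0 then ∏ l ∈ Finset.Icc 1 (i + 1), b l
                  else b (i + 1 + (v : ℕ))) P) =
            χ ((∏ j ∈ Finset.Icc 1 i, ∏ l ∈ Finset.Icc 1 j, b l) * x) := by
  classical
  set A : Finset (MvPolynomial ℕ ℕ) := (Finset.range k).biUnion fun i =>
    (finite_setOf_goodOfSize (σ := Fin (k - i)) ck).toFinset.image
      (MvPolynomial.rename fun v : Fin (k - i) => (v : ℕ)) with hA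
  have hA0 : ∀ P ∈ A, MvPolynomial.coeff 0 P = 0 := by
    intro P hP
    simp only [hA, Finset.mem_biUnion, Finset.mem_image, Set.Finite.mem_toFinset] at hP
    obtain ⟨i, -, P, hP, rfl⟩ := hP
    rw [← MvPolynomial.constantCoeff_eq, MvPolynomial.constantCoeff_rename]
    exact hP.2.1
  obtain ⟨W, hW, hWχ⟩ := exists_finset_monochromatic_tails A hA0 (Fin n) k
  obtain ⟨w, hw, hwχ⟩ := hWχ fun _ => χ
  refine ⟨fun _ => ck, fun _ _ => hck, fun _ _ => le_rfl, rfl, w.1, fun i _ _ => (hW w hw).1 i,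
    w.2, (hW w hw).2, fun i hi P hP => ?_⟩
  have hmem : MvPolynomial.rename (fun v : Fin (k - i) => (v : ℕ)) P ∈ A :=
    Finset.mem_biUnion.mpr ⟨i, Finset.mem_range.mpr hi, Finset.mem_image_of_mem _
      ((Set.Finite.mem_toFinset _).mpr hP)⟩
  have hval : (tailValues w.1 k i ∘ fun v : Fin (k - i) => (v : ℕ)) =
      fun v : Fin (k - i) => if (v : ℕ) = 0 then ∏ l ∈ Finset.Icc 1 (i + 1), w.1 l
        else w.1 (i + 1 + (v : ℕ)) := by
    funext v
    exact if_pos (show i + 1 + (v : ℕ) ≤ k by omega)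
  have := hwχ i hi _ hmem
  rwa [MvPolynomial.aeval_rename, hval] at this
end
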